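/- arXiv:1606.08246 — 4 statements merged into one kernel-verified Lean document; each statement's English description precedes it below -/
import Mathlib

section
/- Let G be a finite bipartite graph and b : V(G) → ℕ. For every b-matching M of G and every set Z ⊆ V(G), |M| ≤ b(V(G) ∖ Z) + |E[Z]| holds; equality holds if and only if (i) E[Z] ⊆ M, (ii) every vertex in V(G) ∖ Z is M-tight, and (iii) E[V(G) ∖ Z] ∩ M = ∅. -/
open scoped symmDiff

variable {V : Type} [Fintype V]

/-- `G` is bipartite with color classes `A` and `B`. -/
structure Bipartition (G : SimpleGraph V) (A B : Set V) : Prop where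
  disjoint : Disjoint A B
  cover : A ∪ B = Set.univ
  between : ∀ ⦃u v : V⦄, G.Adj u v → (u ∈ A ∧ v ∈ B) ∨ (u ∈ B ∧ v ∈ A)

/-- `M` is a `b`-matching of `G`: a set of edges of `G` such that each vertex `v` is
incident to at most `b v` edges of `M`. -/
def IsBMatching (G : SimpleGraph V) (b : V → ℕ) (M : Set (Sym2 V)) : Prop :=
  M ⊆ G.edgeSet ∧ ∀ v : V, {e ∈ M | v ∈ e}.ncard ≤ b v

/-- `M` is a maximum `b`-matching of `G`. -/
def IsMaxBMatching (G : SimpleGraph V) (b : V → ℕ) (M : Set (Sym2 V)) : Prop :=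
  IsBMatching G b M ∧ ∀ N : Set (Sym2 V), IsBMatching G b N → N.ncard ≤ M.ncard

/-- `E[X]`: the set of edges of `G` with both ends in `X`. -/
def edgesIn (G : SimpleGraph V) (X : Set V) : Set (Sym2 V) :=
  {e ∈ G.edgeSet | ∀ v ∈ e, v ∈ X}

/-- `b(X) = ∑_{v ∈ X} b v`. -/
noncomputable def bSum (b : V → ℕ) (X : Set V) : ℕ := ∑ᶠ v ∈ X, b v

/-- `Z` is a `b`-verifying set: `b(Zᶜ) + |E[Z]|` equals the size of a maximum `b`-matching. -/
def IsVerifying (G : SimpleGraph V) (b : V → ℕ) (Z : Set V) : Prop :=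
  ∃ M : Set (Sym2 V), IsMaxBMatching G b M ∧ bSum b Zᶜ + (edgesIn G Z).ncard = M.ncard

/-- `v` is `M`-tight. -/
def IsTight (b : V → ℕ) (M : Set (Sym2 V)) (v : V) : Prop :=
  {e ∈ M | v ∈ e}.ncard = b v

/-- `v` is `M`-loose. -/
def IsLoose (b : V → ℕ) (M : Set (Sym2 V)) (v : V) : Prop :=
  {e ∈ M | v ∈ e}.ncard < b v

/-- `M` is a perfect `b`-matching. -/
def IsPerfect (G : SimpleGraph V) (b : V → ℕ) (M : Set (Sym2 V)) : Prop :=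
  IsBMatching G b M ∧ ∀ v : V, IsTight b M v

/-- An edge is `b`-inevitable if it is an edge of `G` contained in every maximum `b`-matching. -/
def IsInevitable (G : SimpleGraph V) (b : V → ℕ) (e : Sym2 V) : Prop :=
  e ∈ G.edgeSet ∧ ∀ M : Set (Sym2 V), IsMaxBMatching G b M → e ∈ M

/-- An edge is `b`-forbidden if it is an edge of `G` contained in no maximum `b`-matching. -/
def IsForbidden (G : SimpleGraph V) (b : V → ℕ) (e : Sym2 V) : Prop :=
  e ∈ G.edgeSet ∧ ∀ M : Set (Sym2 V), IsMaxBMatching G b M → e ∉ M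

/-- An edge is `b`-flexible if some maximum `b`-matching contains it and some does not. -/
def IsFlexibleEdge (G : SimpleGraph V) (b : V → ℕ) (e : Sym2 V) : Prop :=
  (∃ M : Set (Sym2 V), IsMaxBMatching G b M ∧ e ∈ M) ∧
  (∃ M : Set (Sym2 V), IsMaxBMatching G b M ∧ e ∉ M)

/-- The spanning subgraph of `G` whose edges are the `b`-flexible edges. -/
def flexGraph (G : SimpleGraph V) (b : V → ℕ) : SimpleGraph V where
  Adj u v := IsFlexibleEdge G b s(u, v)
  symm := by
    refine ⟨?_⟩
    intro u v h
    rwa [Sym2.eq_swap] at h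
  loopless := by
    refine ⟨?_⟩
    intro v h
    obtain ⟨⟨M, hM, heM⟩, -⟩ := h
    exact G.loopless.irrefl v ((G.mem_edgeSet).mp (hM.1.1 heM))

/-- A `b`-flexible component of `G`, identified with the corresponding connected
component of the spanning subgraph of flexible edges. -/
abbrev FlexComp (G : SimpleGraph V) (b : V → ℕ) := (flexGraph G b).ConnectedComponent

/-- `D(G;b)`: the set of vertices that are `M`-loose for some maximum `b`-matching `M`. -/
def Dset (G : SimpleGraph V) (b : V → ℕ) : Set V :=
  {v | ∃ M : Set (Sym2 V), IsMaxBMatching G b M ∧ IsLoose b M v}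

/-- `c` is a `b`-loose flexible component. -/
def LooseComp (G : SimpleGraph V) (b : V → ℕ) (c : FlexComp G b) : Prop :=
  ∃ v ∈ c.supp, v ∈ Dset G b

/-- `c` is a `b`-inactive flexible component. -/
def InactiveComp (G : SimpleGraph V) (b : V → ℕ) (c : FlexComp G b) : Prop :=
  ∃ v, c.supp = {v} ∧ b v = 0

/-- `c` is a `b`-inconsistent flexible component. -/
def InconsistentComp (G : SimpleGraph V) (b : V → ℕ) (c : FlexComp G b) : Prop :=
  LooseComp G b c ∨ ∃ v, c.supp = {v} ∧ b v = 0 ∧ ∃ u ∈ Dset G b, G.Adj v u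

/-- `c` is a `b`-consistent flexible component. -/
def ConsistentComp (G : SimpleGraph V) (b : V → ℕ) (c : FlexComp G b) : Prop :=
  ¬ InconsistentComp G b c

/-- `c` is a `b`-loose flexible component hooked up by the color class `W`. -/
def LooseHooked (G : SimpleGraph V) (b : V → ℕ) (W : Set V) (c : FlexComp G b) : Prop :=
  ∃ v ∈ c.supp ∩ W, v ∈ Dset G b

/-- `c` is a `b`-inactive flexible component hooked up by the color class `W`. -/
def InactiveHooked (G : SimpleGraph V) (b : V → ℕ) (W : Set V) (c : FlexComp G b) : Prop :=
  ∃ v, c.supp = {v} ∧ b v = 0 ∧ ∃ u ∈ Dset G b ∩ W, G.Adj v u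

/-- `c` is a `b`-inconsistent flexible component hooked up by the color class `W`. -/
def HookedUp (G : SimpleGraph V) (b : V → ℕ) (W : Set V) (c : FlexComp G b) : Prop :=
  LooseHooked G b W c ∨ InactiveHooked G b W c

/-- `X` is separating: empty or a union of vertex sets of `b`-flexible components. -/
def IsSeparating (G : SimpleGraph V) (b : V → ℕ) (X : Set V) : Prop :=
  ∃ S : Set (FlexComp G b), X = ⋃ c ∈ S, c.supp

/-- The number of edges in the list `es` incident to `v` that lie in `M`. -/
noncomputable def edgeDeg (es : List (Sym2 V)) (M : Set (Sym2 V)) (v : V) : ℕ :=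
  {e : Sym2 V | e ∈ es ∧ v ∈ e ∧ e ∈ M}.ncard

/-- `p` is an `M`-wedge path from `x` to `y`. -/
def IsWedgePath {G : SimpleGraph V} (M : Set (Sym2 V)) {x y : V} (p : G.Walk x y) : Prop :=
  p.IsPath ∧ (∀ v ∈ p.support, v ≠ y → edgeDeg p.edges M v = 1) ∧ edgeDeg p.edges M y = 0

/-- `p` is an `M`-saturated path between `x` and `y`. -/
def IsSaturatedPath {G : SimpleGraph V} (M : Set (Sym2 V)) {x y : V} (p : G.Walk x y) : Prop :=
  p.IsPath ∧ ∀ v ∈ p.support, edgeDeg p.edges M v = 1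

/-- `p` is an `M`-exposed path between `x` and `y`. -/
def IsExposedPath {G : SimpleGraph V} (M : Set (Sym2 V)) {x y : V} (p : G.Walk x y) : Prop :=
  p.IsPath ∧ ∀ v ∈ p.support, edgeDeg p.edges Mᶜ v = 1

/-- `p` is an `(M; A, B)`-ascending path from `u` to `v`. -/
def IsAscending {G : SimpleGraph V} (A B : Set V) (M : Set (Sym2 V)) {u v : V}
    (p : G.Walk u v) : Prop :=
  (u ∈ A → v ∈ A → IsWedgePath M p) ∧
  (u ∈ A → v ∈ B → IsSaturatedPath M p) ∧
  (u ∈ B → v ∈ A → IsExposedPath M p) ∧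
  (u ∈ B → v ∈ B → IsWedgePath M p.reverse)

/-- The one-step relation `⊴_A` on `b`-flexible components: `c₁ ⊴_A c₂` iff `c₁ = c₂`, or
there is a `b`-inevitable edge between `V(c₁) ∩ A` and `V(c₂) ∩ B`, or a `b`-forbidden edge
between `V(c₂) ∩ A` and `V(c₁) ∩ B`. -/
def StepRel (G : SimpleGraph V) (b : V → ℕ) (A B : Set V) (c₁ c₂ : FlexComp G b) : Prop :=
  c₁ = c₂ ∨
  (∃ u ∈ c₁.supp ∩ A, ∃ v ∈ c₂.supp ∩ B, IsInevitable G b s(u, v)) ∨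
  (∃ u ∈ c₂.supp ∩ A, ∃ v ∈ c₁.supp ∩ B, IsForbidden G b s(u, v))

/-- The one-step relation `⊴_A` restricted to `b`-consistent flexible components. -/
def ConsStepRel (G : SimpleGraph V) (b : V → ℕ) (A B : Set V) (c₁ c₂ : FlexComp G b) : Prop :=
  ConsistentComp G b c₁ ∧ ConsistentComp G b c₂ ∧ StepRel G b A B c₁ c₂

/-- `I` is a lower ideal of the relation `r`. -/
def IsLowerIdeal {α : Type*} (r : α → α → Prop) (I : Set α) : Prop :=
  ∀ ⦃c d : α⦄, d ∈ I → r c d → c ∈ I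

/-- `I` is an upper ideal of the relation `r`. -/
def IsUpperIdeal {α : Type*} (r : α → α → Prop) (I : Set α) : Prop :=
  ∀ ⦃c d : α⦄, c ∈ I → r c d → d ∈ I

/-!
For a set `M` of edges and a set `X` of vertices, count the pairs `(v, e)` with `v ∈ X`, `e ∈ M` and
`v ∈ e`. An edge `e ∈ M` occurs twice if it lies in `E[X]`, not at all if it lies in `E[Xᶜ]`, and
once otherwise, so `∑_{v ∈ X} |δ(v) ∩ M| + |E[Xᶜ] ∩ M| = |M| + |E[X] ∩ M|`. With `X = Zᶜ`,
`|M| = ∑_{v ∈ Zᶜ} |δ(v) ∩ M| + |E[Z] ∩ M| - |E[Zᶜ] ∩ M|`, and each of the three conditions for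
equality says that the estimate of one of these three terms is sharp.
-/

section FinsumOrder

variable {ι N : Type*} [AddCommMonoid N] [PartialOrder N] [CanonicallyOrderedAdd N]
  {s : Set ι} {f g : ι → N}

theorem inter_support_subset_of_le (hfg : ∀ i ∈ s, f i ≤ g i) :
    s ∩ f.support ⊆ s ∩ g.support := fun i ⟨hi, hfi⟩ ↦
  ⟨hi, fun hgi ↦ hfi (nonpos_iff_eq_zero.mp (hgi ▸ hfg i hi))⟩

theorem finsum_mem_eq_sum_of_le (hfg : ∀ i ∈ s, f i ≤ g i) (hg : (s ∩ g.support).Finite) :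
    ∑ᶠ i ∈ s, f i = ∑ i ∈ hg.toFinset, f i :=
  finsum_mem_eq_sum_of_subset f (by simpa using inter_support_subset_of_le hfg) (by simp)

theorem finsum_mem_le_finsum_mem_of_le [IsOrderedAddMonoid N] (hfg : ∀ i ∈ s, f i ≤ g i)
    (hg : (s ∩ g.support).Finite) : ∑ᶠ i ∈ s, f i ≤ ∑ᶠ i ∈ s, g i := by
  rw [finsum_mem_eq_sum_of_le hfg hg, finsum_mem_eq_sum g hg]
  exact Finset.sum_le_sum fun i hi ↦ hfg i (hg.mem_toFinset.mp hi).1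

theorem finsum_mem_eq_finsum_mem_iff_of_le [IsOrderedCancelAddMonoid N]
    (hfg : ∀ i ∈ s, f i ≤ g i) (hg : (s ∩ g.support).Finite) :
    ∑ᶠ i ∈ s, f i = ∑ᶠ i ∈ s, g i ↔ ∀ i ∈ s, f i = g i := by
  refine ⟨fun hsum i hi ↦ ?_, finsum_mem_congr rfl⟩
  rw [finsum_mem_eq_sum_of_le hfg hg, finsum_mem_eq_sum g hg,
    Finset.sum_eq_sum_iff_of_le fun j hj ↦ hfg j (hg.mem_toFinset.mp hj).1] at hsum
  by_cases hgi : g i = 0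
  · exact (hfg i hi).antisymm (hgi ▸ zero_le)
  · exact hsum i (hg.mem_toFinset.mpr ⟨hi, hgi⟩)

end FinsumOrder

theorem ncard_inter_eq_left_iff {ι : Type*} {s t : Set ι} (hs : s.Finite) :
    (s ∩ t).ncard = s.ncard ↔ s ⊆ t := by
  rw [← Set.inter_eq_left]
  exact ⟨fun h ↦ Set.eq_of_subset_of_ncard_le Set.inter_subset_left h.ge hs, congrArg Set.ncard⟩

section DoubleCounting

variable {α : Type} {G : SimpleGraph α} {b : α → ℕ} {M : Set (Sym2 α)}

/-- The degree `|δ(v) ∩ M|` of the vertex `v` in a set `M` of edges. As a function of `v` it can be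
summed by `bSum`. -/
noncomputable def degreeIn (M : Set (Sym2 α)) (v : α) : ℕ := {e ∈ M | v ∈ e}.ncard

theorem support_degreeIn_subset (M : Set (Sym2 α)) :
    (degreeIn M).support ⊆ {v | ∃ e ∈ M, v ∈ e} := fun _ hv ↦
  Set.nonempty_of_ncard_ne_zero hv

open scoped Classical in
theorem degreeIn_coe (M : Finset (Sym2 α)) (v : α) :
    degreeIn (M : Set (Sym2 α)) v = (M.filter (v ∈ ·)).card := by
  rw [degreeIn, ← Set.ncard_coe_finset, Finset.coe_filter]
  rfl

open scoped Classical in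
theorem bSum_degreeIn_coe (M : Finset (Sym2 α)) (X : Set α) :
    bSum (degreeIn (M : Set (Sym2 α))) X = ∑ e ∈ M, (e.toFinset.filter (· ∈ X)).card := by
  let F : Finset α := (M.biUnion Sym2.toFinset).filter (· ∈ X)
  have hF : X ∩ (degreeIn (M : Set (Sym2 α))).support ⊆ F := fun v ⟨hvX, hv⟩ ↦ by
    simpa [F, hvX] using support_degreeIn_subset _ hv
  have hFX : (F : Set α) ⊆ X := fun v hv ↦ (Finset.mem_filter.mp hv).2
  calc bSum (degreeIn (M : Set (Sym2 α))) X
      = ∑ v ∈ F, degreeIn (M : Set (Sym2 α)) v := finsum_mem_eq_sum_of_subset _ hF hFX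
    _ = ∑ v ∈ F, (M.filter (v ∈ ·)).card := Finset.sum_congr rfl fun v _ ↦ degreeIn_coe M v
    _ = ∑ e ∈ M, (F.filter (· ∈ e)).card :=
        Finset.sum_card_bipartiteAbove_eq_sum_card_bipartiteBelow (fun v e ↦ v ∈ e)
    _ = ∑ e ∈ M, (e.toFinset.filter (· ∈ X)).card := by
        refine Finset.sum_congr rfl fun e he ↦ congrArg Finset.card ?_
        ext v
        simp only [F, Finset.mem_filter, Finset.mem_biUnion, Sym2.mem_toFinset]
        tauto

open scoped Classical in
theorem card_filter_toFinset_add_ite {e : Sym2 α} (he : ¬ e.IsDiag) (X : Set α) :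
    (e.toFinset.filter (· ∈ X)).card + (if ∀ v ∈ e, v ∈ Xᶜ then 1 else 0) =
      1 + if ∀ v ∈ e, v ∈ X then 1 else 0 := by
  induction e with
  | _ x y =>
    have hxy : x ≠ y := he
    rw [Sym2.toFinset_mk_eq, Finset.filter_insert, Finset.filter_singleton]
    by_cases hx : x ∈ X <;> by_cases hy : y ∈ X <;> simp [hx, hy, hxy]

open scoped Classical in
theorem ncard_edgesIn_inter_coe {M : Finset (Sym2 α)} (hMG : (M : Set (Sym2 α)) ⊆ G.edgeSet)
    (X : Set α) :
    (edgesIn G X ∩ M).ncard = ∑ e ∈ M, if ∀ v ∈ e, v ∈ X then 1 else 0 := by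
  rw [← Finset.card_filter, ← Set.ncard_coe_finset]
  congr 1
  ext e
  have heG : e ∈ M → e ∈ G.edgeSet := @hMG e
  simp only [edgesIn, Set.mem_inter_iff, Set.mem_ofPred_eq, Finset.mem_coe, Finset.mem_filter]
  tauto

theorem bSum_degreeIn_add_ncard (hM : M.Finite) (hMG : M ⊆ G.edgeSet) (X : Set α) :
    bSum (degreeIn M) X + (edgesIn G Xᶜ ∩ M).ncard = M.ncard + (edgesIn G X ∩ M).ncard := by
  classical
  lift M to Finset (Sym2 α) using hM
  rw [bSum_degreeIn_coe, ncard_edgesIn_inter_coe hMG, ncard_edgesIn_inter_coe hMG,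
    Set.ncard_coe_finset, Finset.card_eq_sum_ones, ← Finset.sum_add_distrib,
    ← Finset.sum_add_distrib]
  exact Finset.sum_congr rfl fun e he ↦
    card_filter_toFinset_add_ite (G.not_isDiag_of_mem_edgeSet (hMG he)) X

theorem IsBMatching.bSum_degreeIn_le (hM : IsBMatching G b M) {X : Set α}
    (hX : (X ∩ b.support).Finite) : bSum (degreeIn M) X ≤ bSum b X :=
  finsum_mem_le_finsum_mem_of_le (fun v _ ↦ hM.2 v) hX

theorem IsBMatching.bSum_degreeIn_eq_iff (hM : IsBMatching G b M) {X : Set α}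
    (hX : (X ∩ b.support).Finite) : bSum (degreeIn M) X = bSum b X ↔ ∀ v ∈ X, IsTight b M v :=
  finsum_mem_eq_finsum_mem_iff_of_le (fun v _ ↦ hM.2 v) hX

end DoubleCounting

theorem stmt_1_general {α : Type} {G : SimpleGraph α} {b : α → ℕ} {M : Set (Sym2 α)}
    (hM : IsBMatching G b M) (hMfin : M.Finite) {Z : Set α} (hb : (Zᶜ ∩ b.support).Finite)
    (hE : (edgesIn G Z).Finite) :
    M.ncard ≤ bSum b Zᶜ + (edgesIn G Z).ncard ∧
    (M.ncard = bSum b Zᶜ + (edgesIn G Z).ncard ↔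
      edgesIn G Z ⊆ M ∧ (∀ v ∈ Zᶜ, IsTight b M v) ∧ edgesIn G Zᶜ ∩ M = ∅) := by
  have hcount := bSum_degreeIn_add_ncard hMfin hM.1 Zᶜ
  rw [compl_compl] at hcount
  have hdeg := hM.bSum_degreeIn_le hb
  have hinter : (edgesIn G Z ∩ M).ncard ≤ (edgesIn G Z).ncard :=
    Set.ncard_le_ncard Set.inter_subset_left hE
  rw [← ncard_inter_eq_left_iff hE, ← hM.bSum_degreeIn_eq_iff hb,
    ← Set.ncard_eq_zero (hMfin.subset Set.inter_subset_right)]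
  omega

/-- For every `b`-matching `M` and every `Z ⊆ V(G)`, `|M| ≤ b(Zᶜ) + |E[Z]|`, with equality
iff `E[Z] ⊆ M`, every vertex of `Zᶜ` is `M`-tight, and `E[Zᶜ] ∩ M = ∅`. -/
theorem stmt_1 (G : SimpleGraph V) (A B : Set V) (hG : Bipartition G A B) (b : V → ℕ)
    (M : Set (Sym2 V)) (hM : IsBMatching G b M) (Z : Set V) :
    M.ncard ≤ bSum b Zᶜ + (edgesIn G Z).ncard ∧
    (M.ncard = bSum b Zᶜ + (edgesIn G Z).ncard ↔
      edgesIn G Z ⊆ M ∧ (∀ v ∈ Zᶜ, IsTight b M v) ∧ edgesIn G Zᶜ ∩ M = ∅) :=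
  stmt_1_general hM M.toFinite (Set.toFinite _) (Set.toFinite _)
end

section
/- Let G be a finite bipartite graph, b : V(G) → ℕ, and let M be a b-matching of G. If a set Z ⊆ V(G) satisfies (i) E[Z] ⊆ M, (ii) E[V(G) ∖ Z] ∩ M = ∅, and (iii) every M-loose vertex is contained in Z, then M is a maximum b-matching and Z is a b-verifying set. -/
open scoped symmDiff

variable {V : Type} [Fintype V]

/-!
The edges of a `b`-matching `N` outside `E[Z]` are those meeting `Zᶜ`. Counting them at their ends
in `Zᶜ` gives `|N| ≤ b(Zᶜ) + |E[Z]|` for every `Z`. The three conditions on `M` and `Z` make this an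
equality: no edge is counted twice since `M` has no edge inside `Zᶜ`, every vertex of `Zᶜ` attains
its bound, and `M` contains all of `E[Z]`.
-/

section Counting

omit [Fintype V]

variable {G : SimpleGraph V} {b : V → ℕ} {M : Set (Sym2 V)} {X Z : Set V}

theorem sdiff_edgesIn_eq_biUnion (hM : M ⊆ G.edgeSet) (Z : Set V) :
    M \ edgesIn G Z = ⋃ v ∈ Zᶜ, {e ∈ M | v ∈ e} := by
  ext e
  constructor
  · rintro ⟨heM, heZ⟩
    obtain ⟨v, hve, hvZ⟩ : ∃ v ∈ e, v ∉ Z := by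
      by_contra! h
      exact heZ ⟨hM heM, h⟩
    exact Set.mem_biUnion hvZ ⟨heM, hve⟩
  · intro he
    obtain ⟨v, hvZ, heM, hve⟩ := Set.mem_iUnion₂.mp he
    exact ⟨heM, fun heZ => hvZ (heZ.2 v hve)⟩

theorem pairwiseDisjoint_incident_of_disjoint_edgesIn (hM : M ⊆ G.edgeSet)
    (hX : Disjoint (edgesIn G X) M) : X.PairwiseDisjoint fun v => {e ∈ M | v ∈ e} := by
  intro u hu v hv huv
  refine Set.disjoint_left.mpr fun e ⟨heM, hue⟩ ⟨_, hve⟩ => ?_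
  obtain rfl : e = s(u, v) := (Sym2.mem_and_mem_iff huv).mp ⟨hue, hve⟩
  have h_inside : s(u, v) ∈ edgesIn G X := ⟨hM heM, Sym2.ball.mpr ⟨hu, hv⟩⟩
  exact Set.disjoint_left.mp hX h_inside heM

namespace IsBMatching

theorem isTight_of_not_isLoose (hM : IsBMatching G b M) {v : V} (hv : ¬IsLoose b M v) :
    IsTight b M v :=
  (hM.2 v).antisymm (not_lt.mp hv)

theorem ncard_sdiff_edgesIn_le (hM : IsBMatching G b M) (hZ : Zᶜ.Finite) :
    (M \ edgesIn G Z).ncard ≤ bSum b Zᶜ :=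
  calc
    (M \ edgesIn G Z).ncard = (⋃ v ∈ Zᶜ, {e ∈ M | v ∈ e}).ncard := by
      rw [sdiff_edgesIn_eq_biUnion hM.1]
    _ ≤ ∑ᶠ v ∈ Zᶜ, {e ∈ M | v ∈ e}.ncard := hZ.ncard_biUnion_le _
    _ ≤ bSum b Zᶜ := by
      rw [bSum, finsum_mem_eq_finite_toFinset_sum _ hZ, finsum_mem_eq_finite_toFinset_sum _ hZ]
      exact Finset.sum_le_sum fun v _ => hM.2 v

theorem ncard_le (hM : IsBMatching G b M) (hZ : Zᶜ.Finite) (hE : (edgesIn G Z).Finite) :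
    M.ncard ≤ bSum b Zᶜ + (edgesIn G Z).ncard :=
  calc
    M.ncard ≤ (M \ edgesIn G Z).ncard + (edgesIn G Z).ncard :=
      Set.ncard_le_ncard_sdiff_add_ncard _ _ hE
    _ ≤ bSum b Zᶜ + (edgesIn G Z).ncard :=
      Nat.add_le_add_right (hM.ncard_sdiff_edgesIn_le hZ) _

theorem ncard_sdiff_edgesIn_eq (hM : IsBMatching G b M) (hM_fin : M.Finite) (hZ : Zᶜ.Finite)
    (h_disj : Disjoint (edgesIn G Zᶜ) M) (h_tight : ∀ v ∈ Zᶜ, IsTight b M v) :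
    (M \ edgesIn G Z).ncard = bSum b Zᶜ :=
  calc
    (M \ edgesIn G Z).ncard = (⋃ v ∈ Zᶜ, {e ∈ M | v ∈ e}).ncard := by
      rw [sdiff_edgesIn_eq_biUnion hM.1]
    _ = ∑ᶠ v ∈ Zᶜ, {e ∈ M | v ∈ e}.ncard :=
      hZ.ncard_biUnion (fun _ _ => hM_fin.sep _)
        (pairwiseDisjoint_incident_of_disjoint_edgesIn hM.1 h_disj)
    _ = bSum b Zᶜ := finsum_mem_congr rfl h_tight

theorem bSum_add_ncard_edgesIn_eq (hM : IsBMatching G b M) (hM_fin : M.Finite) (hZ : Zᶜ.Finite)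
    (h_sub : edgesIn G Z ⊆ M) (h_disj : Disjoint (edgesIn G Zᶜ) M)
    (h_tight : ∀ v ∈ Zᶜ, IsTight b M v) :
    bSum b Zᶜ + (edgesIn G Z).ncard = M.ncard := by
  rw [← hM.ncard_sdiff_edgesIn_eq hM_fin hZ h_disj h_tight,
    Set.ncard_sdiff_add_ncard_of_subset h_sub hM_fin]

end IsBMatching

theorem stmt_3_general (hM : IsBMatching G b M) (hM_fin : M.Finite) (hZ : Zᶜ.Finite)
    (h_sub : edgesIn G Z ⊆ M) (h_disj : edgesIn G Zᶜ ∩ M = ∅)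
    (h_loose : ∀ v : V, IsLoose b M v → v ∈ Z) :
    IsMaxBMatching G b M ∧ IsVerifying G b Z := by
  have h_tight : ∀ v ∈ Zᶜ, IsTight b M v := fun v hv =>
    hM.isTight_of_not_isLoose (mt (h_loose v) hv)
  have h_card : bSum b Zᶜ + (edgesIn G Z).ncard = M.ncard :=
    hM.bSum_add_ncard_edgesIn_eq hM_fin hZ h_sub (Set.disjoint_iff_inter_eq_empty.mpr h_disj)
      h_tight
  have h_max : IsMaxBMatching G b M :=
    ⟨hM, fun N hN => h_card ▸ hN.ncard_le hZ (hM_fin.subset h_sub)⟩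
  exact ⟨h_max, M, h_max, h_card⟩

end Counting

/-- If a `b`-matching `M` and a set `Z` satisfy `E[Z] ⊆ M`, `E[Zᶜ] ∩ M = ∅`, and every
`M`-loose vertex lies in `Z`, then `M` is a maximum `b`-matching and `Z` is a
`b`-verifying set. -/
theorem stmt_3 (G : SimpleGraph V) (A B : Set V) (hG : Bipartition G A B) (b : V → ℕ)
    (M : Set (Sym2 V)) (hM : IsBMatching G b M) (Z : Set V)
    (h1 : edgesIn G Z ⊆ M) (h2 : edgesIn G Zᶜ ∩ M = ∅)
    (h3 : ∀ v : V, IsLoose b M v → v ∈ Z) :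
    IsMaxBMatching G b M ∧ IsVerifying G b Z :=
  stmt_3_general hM M.toFinite Zᶜ.toFinite h1 h2 h3
end

section
/- Let G be a finite bipartite graph and b : V(G) → ℕ. Every edge contained in a b-flexible component of G is b-flexible; that is, for every b-flexible component C of G and every edge e of the induced subgraph C, there exists a maximum b-matching containing e and a maximum b-matching not containing e. -/
open scoped symmDiff

variable {V : Type} [Fintype V]

/-!
Say that a vertex set `Z` has value `b(Zᶜ) + |E(G[Z])|`. By a König-type duality, the least value is
the greatest size of a `b`-matching. To see this by induction, take an edge `e` whose ends have
positive capacity, and either delete it or reserve it for the matching. If both fail, there is a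
minimizer of the value containing `e` and another disjoint from `e`; uncrossing them along the
bipartition strictly lowers the sum of the values, because `e` is counted by the first only and lies
in neither of the new sets.

If `Z` attains the minimum, every maximum `b`-matching contains `E(G[Z])` and has no edge inside
`Zᶜ`, so flexible edges join `Z` to `Zᶜ`. As they also join `A` to `B`, whether `A` and `Z` agree at
a vertex is constant on flexible components. Conversely, applying duality to `G - e` shows that an
edge `e` which is not flexible, with ends of positive capacity, has both ends on the same side of
some minimizer. As only one end is in `A`, the ends are in different flexible components.
-/

section

variable {W : Type} {G H : SimpleGraph W} {A B Z Z₁ Z₂ : Set W} {b : W → ℕ}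
  {M : Set (Sym2 W)} {e : Sym2 W} {u v : W}

theorem Bipartition.mono (hG : Bipartition G A B) (hle : H ≤ G) : Bipartition H A B :=
  ⟨hG.disjoint, hG.cover, fun _ _ huv => hG.between (hle huv)⟩

theorem Bipartition.mem_left_iff_notMem_left (hG : Bipartition G A B) (huv : G.Adj u v) :
    u ∈ A ↔ v ∉ A := by
  rcases hG.between huv with ⟨hu, hv⟩ | ⟨hu, hv⟩
  · simp [hu, hG.disjoint.notMem_of_mem_right hv]
  · simp [hv, hG.disjoint.notMem_of_mem_right hu]

theorem Bipartition.exists_eq_mk (hG : Bipartition G A B) (he : e ∈ G.edgeSet) :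
    ∃ u ∈ A, ∃ v ∉ A, e = s(u, v) := by
  induction e with | _ u v
  rcases hG.between he with ⟨hu, hv⟩ | ⟨hu, hv⟩
  · exact ⟨u, hu, v, hG.disjoint.notMem_of_mem_right hv, rfl⟩
  · exact ⟨v, hv, u, hG.disjoint.notMem_of_mem_right hu, Sym2.eq_swap⟩

theorem mk_mem_edgesIn : s(u, v) ∈ edgesIn G Z ↔ G.Adj u v ∧ u ∈ Z ∧ v ∈ Z := by
  simp [edgesIn]

theorem flexGraph_le : flexGraph G b ≤ G :=
  fun _ _ ⟨⟨_, hM, heM⟩, _⟩ => hM.1.1 heM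

theorem isBMatching_deleteEdges_singleton :
    IsBMatching (G.deleteEdges {e}) b M ↔ IsBMatching G b M ∧ e ∉ M := by
  simp only [IsBMatching, SimpleGraph.edgeSet_deleteEdges, Set.subset_sdiff,
    Set.disjoint_singleton_right, and_right_comm]

theorem isInevitable_or_isForbidden (he : e ∈ G.edgeSet) (hflex : ¬ IsFlexibleEdge G b e) :
    IsInevitable G b e ∨ IsForbidden G b e := by
  by_contra! h
  simp only [IsInevitable, IsForbidden, he, true_and] at h
  push Not at h
  exact hflex h.symm

-- Writing `b` as `b' + 1_e` describes the capacities left after reserving `e` without subtraction.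
theorem exists_eq_add_indicator (hb : ∀ v ∈ e, 0 < b v) :
    ∃ b', b = b' + (e : Set W).indicator 1 := by
  have hle : (e : Set W).indicator 1 ≤ b := by
    intro v
    by_cases hv : v ∈ e
    · simpa [hv] using Nat.succ_le_of_lt (hb v hv)
    · simp [hv]
  obtain ⟨b', rfl⟩ := exists_add_of_le hle
  exact ⟨b', add_comm _ _⟩

/-- The value of `Z` in the minimization problem dual to maximum `b`-matching: every `b`-matching
has at most `b(Zᶜ)` edges meeting `Zᶜ`, and its other edges lie in `G[Z]`. A verifying set is one
whose value is the maximum size of a `b`-matching. -/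
noncomputable def coverValue (G : SimpleGraph W) (b : W → ℕ) (Z : Set W) : ℕ :=
  bSum b Zᶜ + (edgesIn G Z).ncard

theorem coverValue_setOf_capacity_pos (hb : ∀ u v, G.Adj u v → 0 < b u → b v = 0) :
    coverValue G b {v | 0 < b v} = 0 := by
  have hbSum : bSum b {v | 0 < b v}ᶜ = 0 :=
    finsum_mem_eq_zero_of_forall_eq_zero fun v hv => Nat.eq_zero_of_not_pos hv
  have hedges : edgesIn G {v | 0 < b v} = ∅ := by
    refine Set.eq_empty_of_forall_notMem fun f hf => ?_
    induction f with | _ u v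
    obtain ⟨huv, hu, hv⟩ := mk_mem_edgesIn.1 hf
    exact hv.ne' (hb u v huv hu)
  simp [coverValue, hbSum, hedges]

theorem IsVerifying.coverValue_eq (hZ : IsVerifying G b Z) (hM : IsMaxBMatching G b M) :
    coverValue G b Z = M.ncard := by
  obtain ⟨N, hN, hNZ⟩ := hZ
  exact hNZ.trans ((hM.2 N hN.1).antisymm (hN.2 M hM.1))

variable [Finite W]

theorem exists_isMaxBMatching (G : SimpleGraph W) (b : W → ℕ) : ∃ M, IsMaxBMatching G b M :=
  Set.exists_max_image {M | IsBMatching G b M} Set.ncard (Set.toFinite _)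
    ⟨∅, by simp [IsBMatching]⟩

theorem IsBMatching.capacity_pos (hM : IsBMatching G b M) (he : e ∈ M) (hv : v ∈ e) : 0 < b v :=
  have hpos : 0 < {f ∈ M | v ∈ f}.ncard := (Set.ncard_pos (Set.toFinite _)).2 ⟨e, he, hv⟩
  hpos.trans_le (hM.2 v)

theorem ncard_incident_insert (heM : e ∉ M) (v : W) :
    {f ∈ insert e M | v ∈ f}.ncard = {f ∈ M | v ∈ f}.ncard + (e : Set W).indicator 1 v := by
  by_cases hv : v ∈ e
  · have hinsert : {f ∈ insert e M | v ∈ f} = insert e {f ∈ M | v ∈ f} := by grind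
    have hnotMem : e ∉ {f ∈ M | v ∈ f} := fun h => heM h.1
    rw [hinsert, Set.ncard_insert_of_notMem hnotMem, Set.indicator_of_mem hv, Pi.one_apply]
  · have hsame : {f ∈ insert e M | v ∈ f} = {f ∈ M | v ∈ f} := by grind
    rw [hsame, Set.indicator_of_notMem hv, add_zero]

theorem isBMatching_insert_iff (he : e ∈ G.edgeSet) (heM : e ∉ M) :
    IsBMatching G (b + (e : Set W).indicator 1) (insert e M) ↔ IsBMatching G b M := by
  simp only [IsBMatching, Set.insert_subset_iff, he, true_and, ncard_incident_insert heM,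
    Pi.add_apply, add_le_add_iff_right]

theorem bSum_add_indicator (b : W → ℕ) (S X : Set W) :
    bSum (b + S.indicator 1) X = bSum b X + (S ∩ X).ncard := by
  have hcount : ∑ᶠ v ∈ X, S.indicator (1 : W → ℕ) v = (S ∩ X).ncard := by
    rw [← finsum_one, finsum_mem_def, finsum_mem_def]
    simp only [← Set.indicator_indicator, Set.inter_comm S X]
    rfl
  rw [← hcount]
  exact finsum_mem_add_distrib X.toFinite

theorem bSum_union_add_bSum_inter (b : W → ℕ) (X Y : Set W) :
    bSum b (X ∪ Y) + bSum b (X ∩ Y) = bSum b X + bSum b Y :=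
  finsum_mem_union_inter X.toFinite Y.toFinite

theorem IsBMatching.ncard_le_coverValue (hM : IsBMatching G b M) (Z : Set W) :
    M.ncard ≤ coverValue G b Z := by
  have hcover : M ⊆ (⋃ v ∈ Zᶜ, {e ∈ M | v ∈ e}) ∪ edgesIn G Z := by
    intro e he
    by_cases heZ : ∀ v ∈ e, v ∈ Z
    · exact Or.inr ⟨hM.1 he, heZ⟩
    · push Not at heZ
      obtain ⟨v, hve, hvZ⟩ := heZ
      exact Or.inl (Set.mem_biUnion hvZ ⟨he, hve⟩)
  calc
    M.ncard ≤ (⋃ v ∈ Zᶜ, {e ∈ M | v ∈ e}).ncard + (edgesIn G Z).ncard :=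
      (Set.ncard_le_ncard hcover).trans (Set.ncard_union_le _ _)
    _ ≤ coverValue G b Z := by
      refine Nat.add_le_add_right ((Set.toFinite Zᶜ).ncard_biUnion_le _ |>.trans ?_) _
      rw [bSum, finsum_mem_eq_finite_toFinset_sum _ (Set.toFinite _),
        finsum_mem_eq_finite_toFinset_sum _ (Set.toFinite _)]
      exact Finset.sum_le_sum fun v _ => hM.2 v

open Classical in
theorem coverValue_eq_deleteEdges_add (he : e ∈ G.edgeSet) :
    coverValue G b Z =
      coverValue (G.deleteEdges {e}) b Z + if (e : Set W) ⊆ Z then 1 else 0 := by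
  have hdelete : edgesIn (G.deleteEdges {e}) Z = edgesIn G Z \ {e} := by
    ext f
    simp [edgesIn, and_right_comm]
  have hmem : e ∈ edgesIn G Z ↔ (e : Set W) ⊆ Z := by
    simp only [edgesIn, Set.mem_ofPred_eq, he, true_and]; rfl
  simp only [coverValue, hdelete, add_assoc]
  split_ifs with heZ
  · rw [Set.ncard_sdiff_singleton_add_one (hmem.2 heZ)]
  · rw [Set.sdiff_singleton_eq_self (mt hmem.1 heZ), add_zero]

open Classical in
theorem coverValue_add_indicator (he : e ∈ G.edgeSet) :
    coverValue G (b + (e : Set W).indicator 1) Z =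
      coverValue (G.deleteEdges {e}) b Z + if Disjoint (e : Set W) Z then 2 else 1 := by
  have hcapacity : coverValue G (b + (e : Set W).indicator 1) Z =
      coverValue G b Z + ((e : Set W) ∩ Zᶜ).ncard := by
    simp only [coverValue, bSum_add_indicator]; ring
  have hends : ((e : Set W) ∩ Zᶜ).ncard + (if (e : Set W) ⊆ Z then 1 else 0) =
      if Disjoint (e : Set W) Z then 2 else 1 := by
    induction e with | _ x y
    have hxy : x ≠ y := G.ne_of_adj he
    by_cases hx : x ∈ Z <;> by_cases hy : y ∈ Z <;>
      simp [hx, hy, hxy, Set.insert_subset_iff, Set.insert_inter_of_mem,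
        Set.insert_inter_of_notMem]
  rw [hcapacity, coverValue_eq_deleteEdges_add he, ← hends]
  ring

theorem subset_of_coverValue_deleteEdges_lt {m : ℕ} (he : e ∈ G.edgeSet)
    (hlt : coverValue (G.deleteEdges {e}) b Z < m) (hle : m ≤ coverValue G b Z) :
    (e : Set W) ⊆ Z ∧ coverValue G b Z = m := by
  rw [coverValue_eq_deleteEdges_add he] at hle ⊢
  split_ifs at hle ⊢ with heZ
  · exact ⟨heZ, by omega⟩
  · omega

theorem disjoint_of_coverValue_deleteEdges_lt {m : ℕ} (he : e ∈ G.edgeSet)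
    (hlt : coverValue (G.deleteEdges {e}) b Z + 1 < m)
    (hle : m ≤ coverValue G (b + (e : Set W).indicator 1) Z) :
    Disjoint (e : Set W) Z ∧ coverValue G (b + (e : Set W).indicator 1) Z = m := by
  rw [coverValue_add_indicator he] at hle ⊢
  split_ifs at hle ⊢ with heZ
  · exact ⟨heZ, by omega⟩
  · omega

theorem Bipartition.ncard_edgesIn_uncross_lt (hG : Bipartition G A B) (he : e ∈ G.edgeSet)
    (he₁ : (e : Set W) ⊆ Z₁) (he₂ : Disjoint (e : Set W) Z₂) :
    (edgesIn G (A.ite (Z₁ ∪ Z₂) (Z₁ ∩ Z₂))).ncard + (edgesIn G (A.ite (Z₁ ∩ Z₂) (Z₁ ∪ Z₂))).ncard <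
      (edgesIn G Z₁).ncard + (edgesIn G Z₂).ncard := by
  set Y₁ := A.ite (Z₁ ∪ Z₂) (Z₁ ∩ Z₂)
  set Y₂ := A.ite (Z₁ ∩ Z₂) (Z₁ ∪ Z₂)
  have hinter : edgesIn G Y₁ ∩ edgesIn G Y₂ ⊆ edgesIn G Z₁ ∩ edgesIn G Z₂ := by
    rintro f ⟨hf₁, hf₂⟩
    obtain ⟨x, hx, y, hy, rfl⟩ := hG.exists_eq_mk hf₁.1
    rw [mk_mem_edgesIn] at hf₁ hf₂
    rw [Set.mem_inter_iff, mk_mem_edgesIn, mk_mem_edgesIn]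
    grind [Set.ite]
  have hunion : edgesIn G Y₁ ∪ edgesIn G Y₂ ⊆ edgesIn G Z₁ ∪ edgesIn G Z₂ := by
    rintro f hf
    obtain ⟨x, hx, y, hy, rfl⟩ := hG.exists_eq_mk (hf.elim And.left And.left)
    rw [Set.mem_union, mk_mem_edgesIn, mk_mem_edgesIn] at hf ⊢
    grind [Set.ite]
  have heY : e ∉ edgesIn G Y₁ ∪ edgesIn G Y₂ := by
    obtain ⟨x, hx, y, hy, rfl⟩ := hG.exists_eq_mk he
    rw [Set.mem_union, mk_mem_edgesIn, mk_mem_edgesIn]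
    rw [Sym2.coe_mk, Set.disjoint_insert_left, Set.disjoint_singleton_left] at he₂
    grind [Set.ite]
  calc
    _ = (edgesIn G Y₁ ∪ edgesIn G Y₂).ncard + (edgesIn G Y₁ ∩ edgesIn G Y₂).ncard :=
      (Set.ncard_union_add_ncard_inter _ _).symm
    _ < (edgesIn G Z₁ ∪ edgesIn G Z₂).ncard + (edgesIn G Z₁ ∩ edgesIn G Z₂).ncard :=
      add_lt_add_of_lt_of_le
        (Set.ncard_lt_ncard (hunion.ssubset_of_mem_notMem (Or.inl ⟨he, he₁⟩) heY))
        (Set.ncard_le_ncard hinter)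
    _ = _ := Set.ncard_union_add_ncard_inter _ _

theorem bSum_compl_uncross (b : W → ℕ) (A Z₁ Z₂ : Set W) :
    bSum b (A.ite (Z₁ ∪ Z₂) (Z₁ ∩ Z₂))ᶜ + bSum b (A.ite (Z₁ ∩ Z₂) (Z₁ ∪ Z₂))ᶜ =
      bSum b Z₁ᶜ + bSum b Z₂ᶜ := by
  have hunion : (A.ite (Z₁ ∪ Z₂) (Z₁ ∩ Z₂))ᶜ ∪ (A.ite (Z₁ ∩ Z₂) (Z₁ ∪ Z₂))ᶜ = Z₁ᶜ ∪ Z₂ᶜ := by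
    grind [Set.ite]
  have hinter : (A.ite (Z₁ ∪ Z₂) (Z₁ ∩ Z₂))ᶜ ∩ (A.ite (Z₁ ∩ Z₂) (Z₁ ∪ Z₂))ᶜ = Z₁ᶜ ∩ Z₂ᶜ := by
    grind [Set.ite]
  rw [← bSum_union_add_bSum_inter, hunion, hinter, bSum_union_add_bSum_inter]

theorem Bipartition.coverValue_uncross_lt (hG : Bipartition G A B) (b : W → ℕ)
    (he : e ∈ G.edgeSet) (he₁ : (e : Set W) ⊆ Z₁) (he₂ : Disjoint (e : Set W) Z₂) :
    coverValue G b (A.ite (Z₁ ∪ Z₂) (Z₁ ∩ Z₂)) + coverValue G b (A.ite (Z₁ ∩ Z₂) (Z₁ ∪ Z₂)) <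
      coverValue G b Z₁ + coverValue G b Z₂ := by
  have hedges := hG.ncard_edgesIn_uncross_lt he he₁ he₂
  have hcapacities := bSum_compl_uncross b A Z₁ Z₂
  simp only [coverValue]
  omega

theorem Bipartition.exists_isBMatching_ncard_eq_coverValue (hG : Bipartition G A B)
    (b : W → ℕ) : ∃ M Z, IsBMatching G b M ∧ M.ncard = coverValue G b Z := by
  induction G using WellFoundedLT.induction generalizing b with | _ G ih
  by_cases! hb : ∀ u v, G.Adj u v → 0 < b u → b v = 0
  · exact ⟨∅, {v | 0 < b v}, by simp [IsBMatching], by simp [coverValue_setOf_capacity_pos hb]⟩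
  obtain ⟨u, v, huv, hu, hv⟩ := hb
  have he : s(u, v) ∈ G.edgeSet := huv
  have hlt : G.deleteEdges {s(u, v)} < G :=
    lt_of_le_of_ne (G.deleteEdges_le _) (by simpa using huv)
  have hG' := hG.mono hlt.le
  obtain ⟨b', rfl⟩ := exists_eq_add_indicator (e := s(u, v)) (b := b)
    (by simpa using ⟨hu, Nat.pos_of_ne_zero hv⟩)
  obtain ⟨Z, hZ⟩ := Finite.exists_min (coverValue G (b' + (s(u, v) : Set W).indicator 1))
  suffices ∃ M, IsBMatching G (b' + (s(u, v) : Set W).indicator 1) M ∧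
      coverValue G (b' + (s(u, v) : Set W).indicator 1) Z ≤ M.ncard by
    obtain ⟨M, hM, hZM⟩ := this
    exact ⟨M, Z, hM, (hM.ncard_le_coverValue Z).antisymm hZM⟩
  by_contra! hsmall
  obtain ⟨M₁, Z₁, hM₁, hMZ₁⟩ := ih _ hlt hG' (b' + (s(u, v) : Set W).indicator 1)
  obtain ⟨M₂, Z₂, hM₂, hMZ₂⟩ := ih _ hlt hG' b'
  rw [isBMatching_deleteEdges_singleton] at hM₁ hM₂
  have hM₁lt := hsmall M₁ hM₁.1
  have hM₂lt := hsmall _ ((isBMatching_insert_iff he hM₂.2).2 hM₂.1)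
  rw [Set.ncard_insert_of_notMem hM₂.2] at hM₂lt
  have hZ₁ := subset_of_coverValue_deleteEdges_lt he (hMZ₁ ▸ hM₁lt) (hZ Z₁)
  have hZ₂ := disjoint_of_coverValue_deleteEdges_lt he (hMZ₂ ▸ hM₂lt) (hZ Z₂)
  -- `Z₁` and `Z₂` are both minimizers, so neither uncrossed set can have a smaller value.
  have huncross := hG.coverValue_uncross_lt (b' + (s(u, v) : Set W).indicator 1) he hZ₁.1 hZ₂.1
  have := hZ (A.ite (Z₁ ∪ Z₂) (Z₁ ∩ Z₂))
  have := hZ (A.ite (Z₁ ∩ Z₂) (Z₁ ∪ Z₂))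
  omega

theorem IsVerifying.mem_of_subset (hZ : IsVerifying G b Z) (hM : IsMaxBMatching G b M)
    (he : e ∈ G.edgeSet) (heZ : (e : Set W) ⊆ Z) : e ∈ M := by
  by_contra heM
  have hle := (isBMatching_deleteEdges_singleton.2 ⟨hM.1, heM⟩).ncard_le_coverValue Z
  have heq := hZ.coverValue_eq hM
  rw [coverValue_eq_deleteEdges_add he, if_pos heZ] at heq
  omega

theorem IsVerifying.notMem_of_disjoint (hZ : IsVerifying G b Z) (hM : IsMaxBMatching G b M)
    (heZ : Disjoint (e : Set W) Z) : e ∉ M := by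
  intro heM
  have he := hM.1.1 heM
  obtain ⟨b', rfl⟩ := exists_eq_add_indicator fun v => hM.1.capacity_pos (v := v) heM
  have hM' : IsBMatching (G.deleteEdges {e}) b' (M \ {e}) := by
    have heM' : e ∉ M \ {e} := by simp
    refine isBMatching_deleteEdges_singleton.2 ⟨(isBMatching_insert_iff he heM').1 ?_, heM'⟩
    rw [Set.insert_sdiff_self_of_mem heM]
    exact hM.1
  have hle := hM'.ncard_le_coverValue Z
  have heq := hZ.coverValue_eq hM
  rw [coverValue_add_indicator he, if_pos heZ, ← Set.ncard_sdiff_singleton_add_one heM] at heq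
  omega

theorem IsVerifying.mem_iff_notMem_of_isFlexibleEdge (hZ : IsVerifying G b Z)
    (huv : IsFlexibleEdge G b s(u, v)) : u ∈ Z ↔ v ∉ Z := by
  obtain ⟨⟨M, hM, heM⟩, N, hN, heN⟩ := huv
  have hnot_subset := mt (hZ.mem_of_subset hN (hM.1.1 heM)) heN
  have hnot_disjoint := mt (hZ.notMem_of_disjoint hM) (not_not.2 heM)
  simp only [Sym2.coe_mk, Set.insert_subset_iff, Set.singleton_subset_iff,
    Set.disjoint_insert_left, Set.disjoint_singleton_left] at hnot_subset hnot_disjoint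
  tauto

theorem IsVerifying.mem_iff_mem_of_reachable (hZ : IsVerifying G b Z)
    (hG : Bipartition G A B) (huv : (flexGraph G b).Reachable u v) :
    (u ∈ A ↔ u ∈ Z) ↔ (v ∈ A ↔ v ∈ Z) := by
  obtain ⟨p⟩ := huv
  induction p with
  | nil => rfl
  | cons h _ ih =>
    have hA := hG.mem_left_iff_notMem_left (flexGraph_le h)
    have hZ' := hZ.mem_iff_notMem_of_isFlexibleEdge h
    tauto

theorem capacity_pos_of_reachable (huv : (flexGraph G b).Reachable u v) (hne : u ≠ v) :
    0 < b u := by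
  obtain ⟨p⟩ := huv
  obtain ⟨⟨M, hM, heM⟩, -⟩ := p.adj_snd (p.not_nil_of_ne hne)
  exact hM.1.capacity_pos heM (Sym2.mem_mk_left _ _)

theorem Bipartition.exists_isVerifying_subset_of_isInevitable (hG : Bipartition G A B)
    (he : IsInevitable G b e) : ∃ Z, IsVerifying G b Z ∧ (e : Set W) ⊆ Z := by
  obtain ⟨M, hM⟩ := exists_isMaxBMatching G b
  obtain ⟨N, Z, hN, hNZ⟩ :=
    (hG.mono (G.deleteEdges_le {e})).exists_isBMatching_ncard_eq_coverValue b
  rw [isBMatching_deleteEdges_singleton] at hN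
  have hlt : N.ncard < M.ncard := by
    by_contra! hle
    exact hN.2 (he.2 N ⟨hN.1, fun N' hN' => (hM.2 N' hN').trans hle⟩)
  obtain ⟨heZ, hZ⟩ :=
    subset_of_coverValue_deleteEdges_lt he.1 (hNZ ▸ hlt) (hM.1.ncard_le_coverValue Z)
  exact ⟨Z, ⟨M, hM, hZ⟩, heZ⟩

theorem Bipartition.exists_isVerifying_disjoint_of_isForbidden (hG : Bipartition G A B)
    (he : IsForbidden G b e) (hb : ∀ v ∈ e, 0 < b v) :
    ∃ Z, IsVerifying G b Z ∧ Disjoint (e : Set W) Z := by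
  obtain ⟨M, hM⟩ := exists_isMaxBMatching G b
  obtain ⟨b', rfl⟩ := exists_eq_add_indicator hb
  obtain ⟨N, Z, hN, hNZ⟩ :=
    (hG.mono (G.deleteEdges_le {e})).exists_isBMatching_ncard_eq_coverValue b'
  rw [isBMatching_deleteEdges_singleton] at hN
  have hlt : N.ncard + 1 < M.ncard := by
    by_contra! hle
    rw [← Set.ncard_insert_of_notMem hN.2] at hle
    exact he.2 _ ⟨(isBMatching_insert_iff he.1 hN.2).2 hN.1,
      fun N' hN' => (hM.2 N' hN').trans hle⟩ (Set.mem_insert e N)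
  obtain ⟨heZ, hZ⟩ :=
    disjoint_of_coverValue_deleteEdges_lt he.1 (hNZ ▸ hlt) (hM.1.ncard_le_coverValue Z)
  exact ⟨Z, ⟨M, hM, hZ⟩, heZ⟩

theorem Bipartition.exists_isVerifying_mem_iff_mem (hG : Bipartition G A B) (huv : G.Adj u v)
    (hu : 0 < b u) (hv : 0 < b v) (hflex : ¬ IsFlexibleEdge G b s(u, v)) :
    ∃ Z, IsVerifying G b Z ∧ (u ∈ Z ↔ v ∈ Z) := by
  rcases isInevitable_or_isForbidden huv hflex with he | he
  · obtain ⟨Z, hZ, heZ⟩ := hG.exists_isVerifying_subset_of_isInevitable he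
    exact ⟨Z, hZ, iff_of_true (heZ (Sym2.mem_mk_left u v)) (heZ (Sym2.mem_mk_right u v))⟩
  · obtain ⟨Z, hZ, heZ⟩ :=
      hG.exists_isVerifying_disjoint_of_isForbidden he (Sym2.ball.2 ⟨hu, hv⟩)
    exact ⟨Z, hZ, iff_of_false (heZ.notMem_of_mem_left (Sym2.mem_mk_left u v))
      (heZ.notMem_of_mem_left (Sym2.mem_mk_right u v))⟩

end

/-- Every edge contained in a `b`-flexible component is `b`-flexible: some maximum
`b`-matching contains it and some does not. -/
theorem stmt_12 (G : SimpleGraph V) (A B : Set V) (hG : Bipartition G A B) (b : V → ℕ)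
    (c : FlexComp G b) (e : Sym2 V) (he : e ∈ edgesIn G c.supp) :
    (∃ M : Set (Sym2 V), IsMaxBMatching G b M ∧ e ∈ M) ∧
    (∃ M : Set (Sym2 V), IsMaxBMatching G b M ∧ e ∉ M) := by
  by_contra hflex
  induction e with | _ u v
  obtain ⟨huv, hu, hv⟩ := mk_mem_edgesIn.1 he
  have hreach : (flexGraph G b).Reachable u v := c.reachable_of_mem_supp hu hv
  have hbu : 0 < b u := capacity_pos_of_reachable hreach huv.ne
  have hbv : 0 < b v := capacity_pos_of_reachable hreach.symm huv.ne'
  obtain ⟨Z, hZ, hZuv⟩ := hG.exists_isVerifying_mem_iff_mem huv hbu hbv hflex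
  have hA := hG.mem_left_iff_notMem_left huv
  have hAZ := hZ.mem_iff_mem_of_reachable hG hreach
  tauto
end

section
/- Let G be a finite bipartite graph with color classes A and B, and b : V(G) → ℕ. The binary relation ⪯_A is a partial order (reflexive, transitive, and antisymmetric) over the set of all b-flexible components of G. -/
open scoped symmDiff

variable {V : Type} [Fintype V]

/-!
A `b`-matching is an integral flow in a network that sends flow from a source through the color
class `Aᶜ` and then through `A` to a sink, and the maximum `b`-matchings are flows with a common
net outflow at every node. Two such flows agree on every arc across a cut that one of them
saturates, so an edge on which they differ lies on a residual cycle; conversely, augmenting along a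
residual cycle changes the flow. Hence an edge is flexible exactly when its ends reach each other in
the residual network of one fixed maximum `b`-matching. A step of `⪯_A` between distinct components
is witnessed by an edge that is a residual arc in one direction. If the step can be reversed by a
chain of steps, then this arc lies on a residual cycle, so the edge is flexible and the two
components coincide.
-/

section Relation

variable {α : Type*} {r : α → α → Prop}

lemma exists_isChain_nodup_of_reflTransGen {a b : α} (h : Relation.ReflTransGen r a b) :
    ∃ l : List α, (a :: l).IsChain r ∧ (a :: l).Nodup ∧ (a :: l).getLast? = some b := by
  induction h using Relation.ReflTransGen.head_induction_on with
  | refl => exact ⟨[], by simp⟩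
  | @head a c hac _ ih =>
    obtain ⟨l, hchain, hnodup, hlast⟩ := ih
    by_cases ha : a ∈ c :: l
    · obtain ⟨s, t, hst⟩ := List.append_of_mem ha
      rw [hst] at hchain hnodup hlast
      exact ⟨t, hchain.right_of_append, hnodup.of_append_right, by simpa using hlast⟩
    · exact ⟨c :: l, hchain.cons_cons hac, hnodup.cons ha, by simpa using hlast⟩

lemma eq_of_reflTransGen_of_reflTransGen
    (hstep : ∀ a b, r a b → Relation.ReflTransGen r b a → a = b) {a b : α}
    (hab : Relation.ReflTransGen r a b) (hba : Relation.ReflTransGen r b a) : a = b := by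
  induction hab with
  | refl => rfl
  | tail _ hcb ih =>
    obtain rfl := ih (hba.head hcb)
    exact hstep _ _ hcb hba

end Relation

section Flow

variable {N : Type*} {c f g : N → N → ℤ} {p q : N}

/-- A feasible integral flow in the network with node set `N` and arc capacities `c`. The value
`f p q` is the net flow from `p` to `q`, so `f` is skew-symmetric, and a lower bound on it is an
upper bound on `f q p`. -/
structure IsFlow (c f : N → N → ℤ) : Prop where
  skew : ∀ p q, f q p = -f p q
  le : f ≤ c

/-- The net amount of flow leaving a node; flow conservation at `p` reads `netOutflow f p = 0`. -/
def netOutflow [Fintype N] (f : N → N → ℤ) (p : N) : ℤ := ∑ q, f p q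

/-- The arcs of the residual network of the flow `f`, along which more flow can be sent. -/
def Residual (c f : N → N → ℤ) (p q : N) : Prop := f p q < c p q

lemma IsFlow.sum_sum_eq_zero (hf : IsFlow c f) (S : Finset N) : ∑ p ∈ S, ∑ q ∈ S, f p q = 0 := by
  have hneg : ∑ p ∈ S, ∑ q ∈ S, f p q = -∑ p ∈ S, ∑ q ∈ S, f p q := by
    conv_lhs => rw [Finset.sum_comm]
    simp only [← Finset.sum_neg_distrib, ← hf.skew]
  lia

/-- The flow sending one unit along the arc from `p` to `q`; it vanishes when `p = q`. -/
def unitArcFlow [DecidableEq N] (p q r s : N) : ℤ :=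
  (if r = p ∧ s = q then 1 else 0) - (if r = q ∧ s = p then 1 else 0)

lemma IsFlow.add_unitArcFlow [DecidableEq N] (hf : IsFlow c f) (hpq : Residual c f p q) :
    IsFlow c (f + unitArcFlow p q) where
  skew r s := by
    simp only [Pi.add_apply, unitArcFlow, hf.skew r s, and_comm (a := s = _)]
    ring
  le r s := by
    have hle := hf.le r s
    simp only [Residual] at hpq
    simp only [Pi.add_apply, unitArcFlow]
    grind

variable [Fintype N]

lemma netOutflow_add (f g : N → N → ℤ) : netOutflow (f + g) = netOutflow f + netOutflow g :=
  funext fun _ => Finset.sum_add_distrib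

lemma IsFlow.sum_netOutflow [DecidableEq N] (hf : IsFlow c f) (S : Finset N) :
    ∑ p ∈ S, netOutflow f p = ∑ p ∈ S, ∑ q ∈ Sᶜ, f p q := by
  simp only [netOutflow, ← Finset.sum_add_sum_compl S, Finset.sum_add_distrib,
    hf.sum_sum_eq_zero S, zero_add]

/- Both flows carry the same total amount across the cut `S`, and `f` saturates it. -/
lemma IsFlow.eq_of_not_residual (hf : IsFlow c f) (hg : IsFlow c g)
    (hfg : netOutflow g = netOutflow f) {S : Finset N}
    (hS : ∀ p ∈ S, ∀ q ∉ S, ¬ Residual c f p q) (hp : p ∈ S) (hq : q ∉ S) : g p q = f p q := by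
  classical
  have hle : ∀ p ∈ S, ∀ q ∈ Sᶜ, g p q ≤ f p q := fun p hp q hq =>
    (hg.le p q).trans (not_lt.mp (hS p hp q (Finset.mem_compl.mp hq)))
  have hsum : ∑ p ∈ S, ∑ q ∈ Sᶜ, g p q = ∑ p ∈ S, ∑ q ∈ Sᶜ, f p q := by
    rw [← hg.sum_netOutflow, ← hf.sum_netOutflow, hfg]
  have hrow := (Finset.sum_eq_sum_iff_of_le fun p hp => Finset.sum_le_sum (hle p hp)).mp hsum p hp
  exact (Finset.sum_eq_sum_iff_of_le (hle p hp)).mp hrow q (Finset.mem_compl.mpr hq)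

lemma IsFlow.reachable_of_ne (hf : IsFlow c f) (hg : IsFlow c g)
    (hfg : netOutflow g = netOutflow f) (hne : g p q ≠ f p q) :
    Relation.ReflTransGen (Residual c f) p q := by
  classical
  by_contra hpq
  let S : Finset N := {s | Relation.ReflTransGen (Residual c f) p s}
  have hS : ∀ r ∈ S, ∀ s ∉ S, ¬ Residual c f r s := by
    intro r hr s hs hrs
    simp only [S, Finset.mem_filter_univ] at hr hs
    exact hs (hr.tail hrs)
  exact hne (hf.eq_of_not_residual hg hfg hS (by simp [S, Relation.ReflTransGen.refl])
    (by simpa [S] using hpq))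

section DecidableEq

variable [DecidableEq N]

lemma netOutflow_unitArcFlow (p q : N) :
    netOutflow (unitArcFlow p q) = Pi.single p 1 - Pi.single q 1 := by
  ext r
  simp [netOutflow, unitArcFlow, ite_and, Pi.single_apply]

/- A simple path never returns to its first node, so no flow is sent back into it. -/
lemma IsFlow.exists_augment_of_isChain (hf : IsFlow c f) (l : List N) :
    ∀ p q, (p :: l).IsChain (Residual c f) → (p :: l).Nodup → (p :: l).getLast? = some q →
      ∃ g, IsFlow c g ∧ netOutflow g = netOutflow f + (Pi.single p 1 - Pi.single q 1) ∧
        (∀ r ∉ p :: l, g r = f r) ∧ f p ≤ g p := by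
  induction l with
  | nil =>
    intro p q _ _ hlast
    obtain rfl : p = q := by simpa using hlast
    exact ⟨f, hf, by simp, fun _ _ => rfl, le_rfl⟩
  | cons m l ih =>
    intro p q hchain hnodup hlast
    obtain ⟨hpm, hchain⟩ := List.isChain_cons_cons.mp hchain
    obtain ⟨hp, hnodup⟩ := List.nodup_cons.mp hnodup
    obtain ⟨g, hg, hout, hoff, -⟩ := ih m q hchain hnodup (by simpa using hlast)
    have hgp : g p = f p := hoff p hp
    refine ⟨g + unitArcFlow p m, hg.add_unitArcFlow (by rwa [Residual, hgp]), ?_, ?_, ?_⟩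
    · rw [netOutflow_add, hout, netOutflow_unitArcFlow]
      abel
    · intro r hr
      simp only [List.mem_cons, not_or] at hr
      ext s
      simp [unitArcFlow, hoff r (by simp [hr]), hr]
    · intro r
      have hmp : p ≠ m := fun h => hp (by simp [h])
      simp only [Pi.add_apply, hgp, unitArcFlow, hmp, false_and, if_false]
      split_ifs <;> simp

lemma IsFlow.exists_augment (hf : IsFlow c f) (hpq : Relation.ReflTransGen (Residual c f) p q) :
    ∃ g, IsFlow c g ∧ netOutflow g = netOutflow f + (Pi.single p 1 - Pi.single q 1) ∧
      f p ≤ g p := by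
  obtain ⟨l, hchain, hnodup, hlast⟩ := exists_isChain_nodup_of_reflTransGen hpq
  obtain ⟨g, hg, hout, -, hle⟩ := hf.exists_augment_of_isChain l p q hchain hnodup hlast
  exact ⟨g, hg, hout, hle⟩

end DecidableEq

/- Saturation of the reverse arc forces the augmenting path from `q` to `p` to avoid it, so that
the path and the arc from `p` to `q` close up to a cycle that changes the flow on this arc. -/
lemma IsFlow.exists_ne_of_reachable (hf : IsFlow c f)
    (hpq : Residual c f p q) (hqp : ¬ Residual c f q p)
    (hreach : Relation.ReflTransGen (Residual c f) q p) :
    ∃ g, IsFlow c g ∧ netOutflow g = netOutflow f ∧ g p q ≠ f p q := by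
  classical
  obtain ⟨g, hg, hout, hle⟩ := hf.exists_augment hreach
  have hgqp : g q p = f q p := le_antisymm ((hg.le q p).trans (not_lt.mp hqp)) (hle p)
  have hgpq : g p q = f p q := by rw [hg.skew q p, hf.skew q p, hgqp]
  have hne : p ≠ q := by
    rintro rfl
    exact hqp hpq
  refine ⟨g + unitArcFlow p q, hg.add_unitArcFlow (by rwa [Residual, hgpq]), ?_, ?_⟩
  · rw [netOutflow_add, hout, netOutflow_unitArcFlow]
    abel
  · simp [unitArcFlow, hgpq, hne]

end Flow

section DegreeNetwork

variable {W : Type*} {G H : SimpleGraph W} {A : Set W} {b : W → ℕ}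
  {g : W ⊕ Bool → W ⊕ Bool → ℤ}

lemma isBipartiteWith_of_le {B : Set W} (hHG : H ≤ G) (hG : G.IsBipartiteWith A B) :
    H.IsBipartiteWith A B :=
  ⟨hG.disjoint, fun _ _ huv => hG.mem_of_adj (hHG huv)⟩

/-- The network that models the subgraphs of `G`, bipartite between `A` and `Aᶜ`, with degrees at
most `b`. Flow runs from the source `inr true` through `Aᶜ`, then through `A`, to the sink
`inr false`; arcs coming from edges of `G` have capacity `1`, and those joining a vertex `v` to the
source or the sink have capacity `b v`. -/
def degreeNetwork (G : SimpleGraph W) [DecidableRel G.Adj] (A : Set W) [DecidablePred (· ∈ A)]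
    (b : W → ℕ) : W ⊕ Bool → W ⊕ Bool → ℤ
  | .inr true, .inl v => if v ∈ A then 0 else b v
  | .inl v, .inl u => if v ∉ A ∧ u ∈ A ∧ G.Adj v u then 1 else 0
  | .inl u, .inr false => if u ∈ A then b u else 0
  | _, _ => 0

variable [DecidablePred (· ∈ A)] [DecidableRel G.Adj] [DecidableRel H.Adj]

lemma degreeNetwork_nonneg (p q : W ⊕ Bool) : 0 ≤ degreeNetwork G A b p q := by
  rcases p with u | _ | _ <;> rcases q with v | _ | _ <;> simp only [degreeNetwork] <;> grind

lemma degreeNetwork_mono {b' : W → ℕ} (hHG : H ≤ G) (hb : b' ≤ b) :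
    degreeNetwork H A b' ≤ degreeNetwork G A b := by
  rintro (u | _ | _) (v | _ | _) <;> simp only [degreeNetwork] <;>
    grind [Pi.le_def, SimpleGraph.le_iff_adj]

/-- The graph on `W` whose edges carry flow under `g`. -/
def IsFlow.graph (hg : IsFlow (degreeNetwork G A b) g) : SimpleGraph W where
  Adj u v := g (.inl u) (.inl v) ≠ 0
  symm.symm u v huv := by rwa [hg.skew, neg_ne_zero]
  loopless.irrefl v hv := by
    have := hg.skew (.inl v) (.inl v)
    lia

instance (hg : IsFlow (degreeNetwork G A b) g) : DecidableRel hg.graph.Adj :=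
  fun _ _ => inferInstanceAs (Decidable (_ ≠ _))

lemma IsFlow.graph_le (hg : IsFlow (degreeNetwork G A b) g) : hg.graph ≤ G := by
  intro u v huv
  have huv : g (.inl u) (.inl v) ≠ 0 := huv
  have hskew := hg.skew (.inl u) (.inl v)
  have hle := hg.le (.inl u) (.inl v)
  have hge := hg.le (.inl v) (.inl u)
  simp only [degreeNetwork, G.adj_comm v u] at hle hge
  grind

lemma IsFlow.apply_inl_inl (hg : IsFlow (degreeNetwork G A b) g) (u v : W) :
    g (.inl u) (.inl v) = if hg.graph.Adj u v then (if u ∈ A then -1 else 1) else 0 := by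
  have hadj : hg.graph.Adj u v ↔ g (.inl u) (.inl v) ≠ 0 := Iff.rfl
  have hskew := hg.skew (.inl u) (.inl v)
  have hle := hg.le (.inl u) (.inl v)
  have hge := hg.le (.inl v) (.inl u)
  simp only [degreeNetwork] at hle hge
  grind

lemma IsFlow.apply_inr_inr (hg : IsFlow (degreeNetwork G A b) g) (i j : Bool) :
    g (.inr i) (.inr j) = 0 := by
  have hle := hg.le (.inr i) (.inr j)
  have hge := hg.le (.inr j) (.inr i)
  rw [hg.skew (.inr i)] at hge
  cases i <;> cases j <;> simp only [degreeNetwork] at hle hge <;> lia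

variable [Fintype W]

lemma sum_ite_adj (H : SimpleGraph W) [DecidableRel H.Adj] (v : W) (t : ℤ) :
    ∑ u, (if H.Adj v u then t else 0) = t * H.degree v := by
  simp only [H.degree_eq_sum_if_adj, Finset.mul_sum, mul_ite, mul_one, mul_zero]

/-- The flow in `degreeNetwork G A b` that corresponds to the subgraph `H` of `G`: it saturates the
network of `H` itself with the degrees as bounds. -/
def subgraphFlow (H : SimpleGraph W) [DecidableRel H.Adj] (A : Set W) [DecidablePred (· ∈ A)]
    (p q : W ⊕ Bool) : ℤ :=
  degreeNetwork H A (fun v => H.degree v) p q - degreeNetwork H A (fun v => H.degree v) q p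

lemma isFlow_subgraphFlow (hHG : H ≤ G) (hb : ∀ v, H.degree v ≤ b v) :
    IsFlow (degreeNetwork G A b) (subgraphFlow H A) where
  skew p q := by simp [subgraphFlow]
  le p q := (sub_le_self _ (degreeNetwork_nonneg q p)).trans (degreeNetwork_mono hHG hb p q)

lemma subgraphFlow_inl_inl (hH : H.IsBipartiteWith A Aᶜ) (u v : W) :
    subgraphFlow H A (.inl u) (.inl v) = if H.Adj u v then (if u ∈ A then -1 else 1) else 0 := by
  have := @hH.mem_of_adj u v
  have := H.adj_comm u v
  simp only [subgraphFlow, degreeNetwork, Set.mem_compl_iff] at *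
  grind

lemma subgraphFlow_inl_inl_ne_zero_iff (hH : H.IsBipartiteWith A Aᶜ) {u v : W} :
    subgraphFlow H A (.inl u) (.inl v) ≠ 0 ↔ H.Adj u v := by
  rw [subgraphFlow_inl_inl hH]
  grind

lemma netOutflow_subgraphFlow_inl (hH : H.IsBipartiteWith A Aᶜ) (v : W) :
    netOutflow (subgraphFlow H A) (.inl v) = 0 := by
  have hedges : ∑ u, subgraphFlow H A (.inl v) (.inl u) =
      (if v ∈ A then -1 else 1) * H.degree v := by
    simp only [subgraphFlow_inl_inl hH, sum_ite_adj]
  simp only [netOutflow, Fintype.sum_sum_type, Fintype.sum_bool, hedges]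
  simp only [subgraphFlow, degreeNetwork]
  split_ifs <;> simp

lemma sum_degree_filter_mem (hH : H.IsBipartiteWith A Aᶜ) :
    ∑ v with v ∈ A, H.degree v = H.edgeSet.ncard := by
  have hH' : H.IsBipartiteWith ({v | v ∈ A} : Finset W) ({v | v ∈ Aᶜ} : Finset W) := by
    simpa only [Finset.coe_filter_univ, Set.ofPred_mem_eq] using hH
  classical
  rw [← SimpleGraph.coe_edgeFinset, Set.ncard_coe_finset]
  exact SimpleGraph.isBipartiteWith_sum_degrees_eq_card_edges hH'

lemma netOutflow_subgraphFlow_sink (hH : H.IsBipartiteWith A Aᶜ) :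
    netOutflow (subgraphFlow H A) (.inr false) = -H.edgeSet.ncard := by
  rw [← sum_degree_filter_mem hH]
  simp [netOutflow, subgraphFlow, degreeNetwork, Finset.sum_ite]

lemma netOutflow_subgraphFlow_source (hH : H.IsBipartiteWith A Aᶜ) :
    netOutflow (subgraphFlow H A) (.inr true) = H.edgeSet.ncard := by
  have hH' : H.IsBipartiteWith Aᶜ Aᶜᶜ := by simpa only [compl_compl] using hH.symm
  rw [← sum_degree_filter_mem hH']
  simp [netOutflow, subgraphFlow, degreeNetwork, Finset.sum_ite]

lemma netOutflow_subgraphFlow_eq_iff (hG : G.IsBipartiteWith A Aᶜ) (hH : H.IsBipartiteWith A Aᶜ) :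
    netOutflow (subgraphFlow G A) = netOutflow (subgraphFlow H A) ↔
      G.edgeSet.ncard = H.edgeSet.ncard := by
  simp [funext_iff, netOutflow_subgraphFlow_inl, netOutflow_subgraphFlow_source,
    netOutflow_subgraphFlow_sink, hG, hH]

lemma IsFlow.apply_inl_inr (hg : IsFlow (degreeNetwork G A b) g)
    (hout : ∀ v, netOutflow g (.inl v) = 0) (v : W) (i : Bool) :
    g (.inl v) (.inr i) = if v ∈ A then (if i then 0 else (hg.graph.degree v : ℤ)) else
      (if i then -(hg.graph.degree v : ℤ) else 0) := by
  have hedges : ∑ u, g (.inl v) (.inl u) = (if v ∈ A then -1 else 1) * hg.graph.degree v := by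
    simp only [hg.apply_inl_inl, sum_ite_adj]
  have hv := hout v
  simp only [netOutflow, Fintype.sum_sum_type, Fintype.sum_bool, hedges] at hv
  have hle := hg.le (.inl v)
  have hge := fun q => hg.le q (.inl v)
  simp only [hg.skew (.inl v)] at hge
  have hle_source := hle (.inr true)
  have hle_sink := hle (.inr false)
  have hge_source := hge (.inr true)
  have hge_sink := hge (.inr false)
  simp only [degreeNetwork] at hle_source hle_sink hge_source hge_sink
  cases i <;> grind

lemma IsFlow.degree_graph_le (hg : IsFlow (degreeNetwork G A b) g)
    (hout : ∀ v, netOutflow g (.inl v) = 0) (v : W) : hg.graph.degree v ≤ b v := by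
  have hsink := hg.le (.inl v) (.inr false)
  have hsource := hg.le (.inr true) (.inl v)
  rw [hg.apply_inl_inr hout] at hsink
  rw [hg.skew (.inl v), hg.apply_inl_inr hout] at hsource
  simp only [degreeNetwork] at hsink hsource
  grind

lemma IsFlow.subgraphFlow_graph (hG : G.IsBipartiteWith A Aᶜ)
    (hg : IsFlow (degreeNetwork G A b) g) (hout : ∀ v, netOutflow g (.inl v) = 0) :
    subgraphFlow hg.graph A = g := by
  have hbip : hg.graph.IsBipartiteWith A Aᶜ := isBipartiteWith_of_le hg.graph_le hG
  ext (u | i) (v | j)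
  · rw [subgraphFlow_inl_inl hbip, hg.apply_inl_inl]
  · rw [hg.apply_inl_inr hout]
    cases j <;> simp only [subgraphFlow, degreeNetwork] <;> grind
  · rw [hg.skew (.inl v), hg.apply_inl_inr hout]
    cases i <;> simp only [subgraphFlow, degreeNetwork] <;> grind
  · rw [hg.apply_inr_inr]
    cases i <;> cases j <;> simp only [subgraphFlow, degreeNetwork, sub_self]

/-- Reachability between vertices of `G` in the residual network of the flow that corresponds to
the subgraph `H`; for maximum `b`-matchings `H` this plays the role of alternating paths. -/
def ResidualReachable (G : SimpleGraph W) [DecidableRel G.Adj] (A : Set W)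
    [DecidablePred (· ∈ A)] (b : W → ℕ) (H : SimpleGraph W) [DecidableRel H.Adj] (u v : W) : Prop :=
  Relation.ReflTransGen (Residual (degreeNetwork G A b) (subgraphFlow H A)) (.inl u) (.inl v)

lemma residual_inl_inl_iff {u v : W} (hG : G.IsBipartiteWith A Aᶜ) (hHG : H ≤ G)
    (huv : G.Adj u v) :
    Residual (degreeNetwork G A b) (subgraphFlow H A) (.inl u) (.inl v) ↔
      (u ∈ A ↔ H.Adj u v) := by
  have hmem := hG.mem_of_adj huv
  simp only [Residual, subgraphFlow_inl_inl (isBipartiteWith_of_le hHG hG), degreeNetwork,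
    Set.mem_compl_iff] at *
  grind

end DegreeNetwork

section BMatching

variable {W : Type} {G H : SimpleGraph W} {A B : Set W} {b : W → ℕ} {M : Set (Sym2 W)} {u v : W}

lemma Bipartition.isBipartiteWith_compl (hG : Bipartition G A B) : G.IsBipartiteWith A Aᶜ := by
  have hB : B = Aᶜ := (IsCompl.of_eq hG.disjoint.inter_eq hG.cover).compl_eq.symm
  rw [← hB]
  exact ⟨hG.disjoint, hG.between⟩

lemma IsBMatching.exists_edgeSet_eq (hM : IsBMatching G b M) :
    ∃ H : SimpleGraph W, H.edgeSet = M := by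
  refine ⟨.fromEdgeSet M, ?_⟩
  rw [SimpleGraph.edgeSet_fromEdgeSet, sdiff_eq_left, ← Set.subset_compl_iff_disjoint_right]
  exact hM.1.trans G.edgeSet_subset_compl_diagSet

lemma IsBMatching.le (hH : IsBMatching G b H.edgeSet) : H ≤ G :=
  SimpleGraph.edgeSet_subset_edgeSet.mp hH.1

lemma IsMaxBMatching.isBipartiteWith (hG : G.IsBipartiteWith A Aᶜ)
    (hH : IsMaxBMatching G b H.edgeSet) : H.IsBipartiteWith A Aᶜ :=
  isBipartiteWith_of_le hH.1.le hG

lemma exists_isMaxBMatching_edgeSet [Finite W] (G : SimpleGraph W) (b : W → ℕ) :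
    ∃ H : SimpleGraph W, IsMaxBMatching G b H.edgeSet := by
  obtain ⟨M, hM, hmax⟩ := Set.exists_max_image {M | IsBMatching G b M} Set.ncard
    (Set.toFinite _) ⟨∅, by simp [IsBMatching]⟩
  obtain ⟨H, rfl⟩ := IsBMatching.exists_edgeSet_eq hM
  exact ⟨H, hM, hmax⟩

section ResidualNetwork

variable [Fintype W] [DecidablePred (· ∈ A)] [DecidableRel H.Adj]

lemma isBMatching_edgeSet_iff :
    IsBMatching G b H.edgeSet ↔ H ≤ G ∧ ∀ v, H.degree v ≤ b v := by
  have hdegree (v : W) : {e ∈ H.edgeSet | v ∈ e}.ncard = H.degree v := by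
    classical
    rw [← H.card_incidenceSet_eq_degree, ← Nat.card_eq_fintype_card, Nat.card_coe_set_eq,
      SimpleGraph.incidenceSet]
  simp only [IsBMatching, SimpleGraph.edgeSet_subset_edgeSet, hdegree]

lemma IsMaxBMatching.netOutflow_subgraphFlow_eq {H' : SimpleGraph W}
    [DecidableRel H'.Adj] (hG : G.IsBipartiteWith A Aᶜ) (hH : IsMaxBMatching G b H.edgeSet)
    (hH' : IsMaxBMatching G b H'.edgeSet) :
    netOutflow (subgraphFlow H A) = netOutflow (subgraphFlow H' A) :=
  (netOutflow_subgraphFlow_eq_iff (hH.isBipartiteWith hG) (hH'.isBipartiteWith hG)).mpr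
    (le_antisymm (hH'.2 _ hH.1) (hH.2 _ hH'.1))

variable [DecidableRel G.Adj]

lemma IsMaxBMatching.isFlow (hH : IsMaxBMatching G b H.edgeSet) :
    IsFlow (degreeNetwork G A b) (subgraphFlow H A) :=
  have hHG := isBMatching_edgeSet_iff.mp hH.1
  isFlow_subgraphFlow hHG.1 hHG.2

lemma IsMaxBMatching.isMaxBMatching_graph {g : W ⊕ Bool → W ⊕ Bool → ℤ}
    (hG : G.IsBipartiteWith A Aᶜ) (hH : IsMaxBMatching G b H.edgeSet)
    (hg : IsFlow (degreeNetwork G A b) g)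
    (hgH : netOutflow g = netOutflow (subgraphFlow H A)) :
    IsMaxBMatching G b hg.graph.edgeSet := by
  have hHA := hH.isBipartiteWith hG
  have hout (v : W) : netOutflow g (.inl v) = 0 := by rw [hgH, netOutflow_subgraphFlow_inl hHA]
  have hcard : hg.graph.edgeSet.ncard = H.edgeSet.ncard := by
    rwa [← netOutflow_subgraphFlow_eq_iff (isBipartiteWith_of_le hg.graph_le hG) hHA,
      hg.subgraphFlow_graph hG hout]
  exact ⟨isBMatching_edgeSet_iff.mpr ⟨hg.graph_le, hg.degree_graph_le hout⟩, hcard ▸ hH.2⟩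

lemma IsFlexibleEdge.residualReachable (hG : G.IsBipartiteWith A Aᶜ)
    (hH : IsMaxBMatching G b H.edgeSet) (huv : IsFlexibleEdge G b s(u, v)) :
    ResidualReachable G A b H u v := by
  classical
  obtain ⟨M, hM, hdiff⟩ : ∃ M, IsMaxBMatching G b M ∧ ¬(s(u, v) ∈ M ↔ H.Adj u v) := by
    obtain ⟨⟨M, hM, hmem⟩, ⟨M', hM', hnmem⟩⟩ := huv
    by_cases hadj : H.Adj u v
    exacts [⟨M', hM', by simp [hnmem, hadj]⟩, ⟨M, hM, by simp [hmem, hadj]⟩]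
  obtain ⟨H', rfl⟩ := hM.1.exists_edgeSet_eq
  refine hH.isFlow.reachable_of_ne hM.isFlow (hM.netOutflow_subgraphFlow_eq hG hH) fun heq => ?_
  rw [SimpleGraph.mem_edgeSet, ← subgraphFlow_inl_inl_ne_zero_iff (hM.isBipartiteWith hG), heq,
    subgraphFlow_inl_inl_ne_zero_iff (hH.isBipartiteWith hG)] at hdiff
  exact hdiff Iff.rfl

lemma IsMaxBMatching.isFlexibleEdge_of_residual (hG : G.IsBipartiteWith A Aᶜ)
    (hH : IsMaxBMatching G b H.edgeSet) (hadj : G.Adj u v)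
    (huv : Residual (degreeNetwork G A b) (subgraphFlow H A) (.inl u) (.inl v))
    (hvu : ResidualReachable G A b H v u) : IsFlexibleEdge G b s(u, v) := by
  have hHG := hH.1.le
  have hsat : ¬ Residual (degreeNetwork G A b) (subgraphFlow H A) (.inl v) (.inl u) := by
    have hmem := hG.mem_of_adj hadj
    rw [residual_inl_inl_iff hG hHG hadj] at huv
    rw [residual_inl_inl_iff hG hHG hadj.symm, H.adj_comm]
    simp only [Set.mem_compl_iff] at hmem
    tauto
  obtain ⟨g, hg, hgH, hne⟩ := hH.isFlow.exists_ne_of_reachable huv hsat hvu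
  have hmax := hH.isMaxBMatching_graph hG hg hgH
  have hdiff : ¬(hg.graph.Adj u v ↔ H.Adj u v) := by
    rw [hg.apply_inl_inl, subgraphFlow_inl_inl (hH.isBipartiteWith hG)] at hne
    exact fun h => hne (by simp only [h])
  by_cases h : H.Adj u v
  · exact ⟨⟨_, hH, h⟩, _, hmax, fun hg => hdiff (iff_of_true hg h)⟩
  · exact ⟨⟨_, hmax, by simpa [h] using hdiff⟩, _, hH, h⟩

lemma residualReachable_of_mem_supp (hG : G.IsBipartiteWith A Aᶜ)
    (hH : IsMaxBMatching G b H.edgeSet) {c : FlexComp G b} (hu : u ∈ c.supp) (hv : v ∈ c.supp) :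
    ResidualReachable G A b H u v := by
  have huv : (flexGraph G b).Reachable u v := c.reachable_of_mem_supp hu hv
  rw [SimpleGraph.reachable_iff_reflTransGen] at huv
  exact huv.trans_induction_on (fun _ => .refl) (fun h => h.residualReachable hG hH)
    fun _ _ => .trans

lemma StepRel.eq_or_exists_residual (hG : Bipartition G A B) (hH : IsMaxBMatching G b H.edgeSet)
    {c d : FlexComp G b} (hcd : StepRel G b A B c d) :
    c = d ∨ ∃ u ∈ c.supp, ∃ v ∈ d.supp, G.Adj u v ∧
      Residual (degreeNetwork G A b) (subgraphFlow H A) (.inl u) (.inl v) := by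
  have hG' := hG.isBipartiteWith_compl
  have hHG := hH.1.le
  rcases hcd with rfl | ⟨u, ⟨huc, huA⟩, v, ⟨hvd, -⟩, huv, hinev⟩ |
    ⟨v, ⟨hvd, -⟩, u, ⟨huc, huB⟩, hvu, hforb⟩
  · exact .inl rfl
  · refine .inr ⟨u, huc, v, hvd, huv, ?_⟩
    rw [residual_inl_inl_iff hG' hHG huv]
    exact iff_of_true huA (hinev _ hH)
  · have huv : G.Adj u v := hvu.symm
    refine .inr ⟨u, huc, v, hvd, huv, ?_⟩
    rw [residual_inl_inl_iff hG' hHG huv, H.adj_comm]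
    exact iff_of_false (hG.disjoint.notMem_of_mem_right huB) (hforb _ hH)

lemma residualReachable_of_reflTransGen_stepRel (hG : Bipartition G A B)
    (hH : IsMaxBMatching G b H.edgeSet) {c d : FlexComp G b}
    (hcd : Relation.ReflTransGen (StepRel G b A B) c d) (hu : u ∈ c.supp) (hv : v ∈ d.supp) :
    ResidualReachable G A b H u v := by
  have hG' := hG.isBipartiteWith_compl
  induction hcd generalizing v with
  | refl => exact residualReachable_of_mem_supp hG' hH hu hv
  | tail _ hstep ih =>
    obtain rfl | ⟨p, hp, q, hq, -, hpq⟩ := hstep.eq_or_exists_residual hG hH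
    · exact ih hv
    · exact ((ih hp).tail hpq).trans (residualReachable_of_mem_supp hG' hH hq hv)

end ResidualNetwork

lemma StepRel.eq_of_reflTransGen [Finite W] (hG : Bipartition G A B) {c d : FlexComp G b}
    (hcd : StepRel G b A B c d) (hdc : Relation.ReflTransGen (StepRel G b A B) d c) : c = d := by
  classical
  have := Fintype.ofFinite W
  obtain ⟨H, hH⟩ := exists_isMaxBMatching_edgeSet G b
  obtain rfl | ⟨u, hu, v, hv, hadj, huv⟩ := hcd.eq_or_exists_residual hG hH
  · rfl
  have hvu := residualReachable_of_reflTransGen_stepRel hG hH hdc hv hu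
  have hflex : (flexGraph G b).Adj u v :=
    hH.isFlexibleEdge_of_residual hG.isBipartiteWith_compl hadj huv hvu
  exact SimpleGraph.ConnectedComponent.eq_of_common_vertex (c.mem_supp_of_adj_mem_supp hu hflex) hv

end BMatching

/-- The relation `⪯_A`, defined on all `b`-flexible components as chains of one-step
relations `⊴_A`, is reflexive, transitive, and antisymmetric. -/
theorem stmt_16 (G : SimpleGraph V) (A B : Set V) (hG : Bipartition G A B) (b : V → ℕ) :
    (∀ c : FlexComp G b, Relation.ReflTransGen (StepRel G b A B) c c) ∧
    (∀ c d e : FlexComp G b, Relation.ReflTransGen (StepRel G b A B) c d →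
      Relation.ReflTransGen (StepRel G b A B) d e →
      Relation.ReflTransGen (StepRel G b A B) c e) ∧
    (∀ c d : FlexComp G b, Relation.ReflTransGen (StepRel G b A B) c d →
      Relation.ReflTransGen (StepRel G b A B) d c → c = d) :=
  ⟨fun _ => .refl, fun _ _ _ => .trans, fun _ _ =>
    eq_of_reflTransGen_of_reflTransGen fun _ _ => StepRel.eq_of_reflTransGen hG⟩
end
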